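/- arXiv:2310.19330 — 2 statements merged into one kernel-verified Lean document; each statement's English description precedes it below -/
import Mathlib

section
/- Let 0 < T ≤ ∞, let γ ∈ (0, 1/4), and let u be a smooth function on (0,T) × ℝⁿ solving the heat equation ∂ₜu = Δu, satisfying: for all 0 < a < b < T there exists C(a,b) > 0 such that for every R > 0, (∫ₐᵇ ∫_{B(0,R)} |u(t,x)|² dt dx)^{1/2} ≤ C(a,b)·exp(γR²/(b−a)); and there is a sequence (t_k) in (0,T) tending to 0 with (u(t_k)) bounded in 𝒮′(ℝⁿ). Let u₀ ∈ 𝒮′(ℝⁿ) be the distribution with u(t) = e^{tΔ}u₀ for all 0 < t < T. Then for every t ∈ (0,T), the function x ↦ u(t,x) defines a tempered distribution, and u(t) → u₀ in 𝒮′(ℝⁿ) as t → 0⁺, i.e. ∫_{ℝⁿ} u(t,x)φ(x) dx → ⟨u₀, φ⟩ for every φ ∈ 𝒮(ℝⁿ). -/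
open MeasureTheory Metric Filter Set
open scoped Real ENNReal Topology

noncomputable section

abbrev ES (n : ℕ) := EuclideanSpace ℝ (Fin n)

/-- The heat semigroup `e^{tΔ}` applied to a function `h`:
`(e^{tΔ}h)(x) = ∫ (4πt)^{-n/2} exp(-|x-y|²/(4t)) h(y) dy`. -/
def heatOp (n : ℕ) (t : ℝ) (h : ES n → ℝ) (x : ES n) : ℝ :=
  ∫ y : ES n, (4 * Real.pi * t) ^ (-(n : ℝ) / 2) * Real.exp (-‖x - y‖ ^ 2 / (4 * t)) * h y

/-- The Laplacian of `f`, as the sum of its second partial derivatives. -/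
def heatLap (n : ℕ) (f : ES n → ℝ) (x : ES n) : ℝ :=
  ∑ i : Fin n,
    fderiv ℝ (fun y => fderiv ℝ f y (EuclideanSpace.single i 1)) x (EuclideanSpace.single i 1)

/-!
On the Fourier side `e^{tΔ}` is multiplication by `e^{-4π²t|ξ|²}`, a dilation `g(ε·)` of a single
Schwartz Gaussian `g` with `g(0) = 1`. Since `g(ε·)f → g(0)f` in the Schwartz topology as `ε → 0`,
also `e^{tΔ}φ → φ`, and `⟨u(t), φ⟩ = ⟨u₀, e^{tΔ}φ⟩ → ⟨u₀, φ⟩`.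

For fixed `t > 0` the multiplier is itself Schwartz, so every seminorm of `e^{tΔ}φ` is controlled
by a weighted `L¹` norm of `φ`, and hence `|∫ u(t)φ| ≤ C ∫ (1 + |x|)^N |φ|`. Testing against
approximate identities turns this into `|u(t)| ≤ C (1 + |x|)^N` almost everywhere, which makes
`u(t)φ` integrable for every Schwartz `φ`.
-/

open SchwartzMap FourierTransform
open scoped ContDiff

section Multiplication

variable {E F G H : Type*} [NormedAddCommGroup E] [NormedSpace ℝ E]
  [NormedAddCommGroup F] [NormedSpace ℝ F] [NormedAddCommGroup G] [NormedSpace ℝ G]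
  [NormedAddCommGroup H] [NormedSpace ℝ H]

lemma pow_mul_norm_iteratedFDeriv_bilin_le (B : F →L[ℝ] G →L[ℝ] H) {h : E → F}
    (hh : ContDiff ℝ ∞ h) (f : 𝓢(E, G)) {k l m : ℕ} {M : ℝ} {x : E}
    (hM : ∀ i ≤ l, ‖iteratedFDeriv ℝ i h x‖ ≤ M * (1 + ‖x‖) ^ m) :
    ‖x‖ ^ k * ‖iteratedFDeriv ℝ l (fun y ↦ B (h y) (f y)) x‖ ≤
      ‖B‖ * M * 2 ^ (k + m + l) *
        (Finset.Iic (k + m, l)).sup (schwartzSeminormFamily ℝ E G) f := by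
  set S := (Finset.Iic (k + m, l)).sup (schwartzSeminormFamily ℝ E G) f
  have hM₀ : 0 ≤ M := nonneg_of_mul_nonneg_left
    ((norm_nonneg _).trans (hM 0 l.zero_le)) (by positivity)
  have hterm : ∀ i ∈ Finset.range (l + 1),
      ‖x‖ ^ k * (l.choose i * ‖iteratedFDeriv ℝ i h x‖ * ‖iteratedFDeriv ℝ (l - i) f x‖) ≤
        l.choose i * (M * (2 ^ (k + m) * S)) := fun i hi ↦
    calc ‖x‖ ^ k * (l.choose i * ‖iteratedFDeriv ℝ i h x‖ * ‖iteratedFDeriv ℝ (l - i) f x‖)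
      _ ≤ (1 + ‖x‖) ^ k * (l.choose i * (M * (1 + ‖x‖) ^ m) *
          ‖iteratedFDeriv ℝ (l - i) f x‖) := by
        gcongr
        · linarith
        · exact hM i (Finset.mem_range_succ_iff.mp hi)
      _ = l.choose i * (M * ((1 + ‖x‖) ^ (k + m) * ‖iteratedFDeriv ℝ (l - i) f x‖)) := by ring
      _ ≤ l.choose i * (M * (2 ^ (k + m) * S)) := by
        have hf : (1 + ‖x‖) ^ (k + m) * ‖iteratedFDeriv ℝ (l - i) f x‖ ≤ 2 ^ (k + m) * S :=
          one_add_le_sup_seminorm_apply (𝕜 := ℝ) (m := (k + m, l)) le_rfl (l.sub_le i) f x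
        exact mul_le_mul_of_nonneg_left (mul_le_mul_of_nonneg_left hf hM₀) (by positivity)
  calc ‖x‖ ^ k * ‖iteratedFDeriv ℝ l (fun y ↦ B (h y) (f y)) x‖
    _ ≤ ‖x‖ ^ k * (‖B‖ * ∑ i ∈ Finset.range (l + 1),
          l.choose i * ‖iteratedFDeriv ℝ i h x‖ * ‖iteratedFDeriv ℝ (l - i) f x‖) := by
      gcongr
      exact B.norm_iteratedFDeriv_le_of_bilinear hh (f.smooth ⊤) x (mod_cast le_top)
    _ = ‖B‖ * ∑ i ∈ Finset.range (l + 1), ‖x‖ ^ k *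
          (l.choose i * ‖iteratedFDeriv ℝ i h x‖ * ‖iteratedFDeriv ℝ (l - i) f x‖) := by
      rw [← Finset.mul_sum]; ring
    _ ≤ ‖B‖ * ∑ i ∈ Finset.range (l + 1), l.choose i * (M * (2 ^ (k + m) * S)) :=
      mul_le_mul_of_nonneg_left (Finset.sum_le_sum hterm) (norm_nonneg B)
    _ = ‖B‖ * M * 2 ^ (k + m + l) * S := by
      rw [← Finset.sum_mul, ← Nat.cast_sum, Nat.sum_range_choose]
      push_cast
      ring

lemma exists_norm_iteratedFDeriv_comp_smul_sub_le (g : 𝓢(E, F)) (l : ℕ) :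
    ∃ B, ∀ ε : ℝ, |ε| ≤ 1 → ∀ i ≤ l, ∀ x,
      ‖iteratedFDeriv ℝ i (fun y ↦ g (ε • y) - g 0) x‖ ≤ |ε| * B * (1 + ‖x‖) ^ 1 := by
  let S (i : ℕ) : ℝ := SchwartzMap.seminorm ℝ 0 i g
  refine ⟨S 1 + ∑ i ∈ Finset.range (l + 1), S i, fun ε hε i hi x ↦ ?_⟩
  have hS (i : ℕ) : 0 ≤ S i := apply_nonneg _ _
  have hsum : S i ≤ ∑ i ∈ Finset.range (l + 1), S i :=
    Finset.single_le_sum (fun i _ ↦ hS i) (Finset.mem_range_succ_iff.mpr hi)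
  rw [pow_one]
  rcases eq_or_ne i 0 with rfl | hi₀
  · have hlip : ‖g (ε • x) - g 0‖ ≤ S 1 * ‖ε • x - 0‖ :=
      convex_univ.norm_image_sub_le_of_norm_fderiv_le (fun y _ ↦ g.differentiableAt)
        (fun y _ ↦ by
          simpa [norm_iteratedFDeriv_one] using norm_iteratedFDeriv_le_seminorm ℝ g 1 y)
        (mem_univ 0) (mem_univ _)
    calc ‖iteratedFDeriv ℝ 0 (fun y ↦ g (ε • y) - g 0) x‖
      _ ≤ |ε| * S 1 * ‖x‖ := by
        rw [norm_iteratedFDeriv_zero]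
        simpa [norm_smul, mul_comm, mul_assoc, mul_left_comm] using hlip
      _ ≤ |ε| * (S 1 + ∑ i ∈ Finset.range (l + 1), S i) * (1 + ‖x‖) := by
        gcongr
        · linarith [hS 0]
        · linarith
  · calc ‖iteratedFDeriv ℝ i (fun y ↦ g (ε • y) - g 0) x‖
      _ = |ε| ^ i * ‖iteratedFDeriv ℝ i g (ε • x)‖ := by
        have hg : ContDiff ℝ i fun y ↦ g (ε • y) := (g.smooth i).comp (by fun_prop)
        rw [fun_iteratedFDeriv_sub_apply hg.contDiffAt contDiffAt_const,
          iteratedFDeriv_const_of_ne hi₀, iteratedFDeriv_comp_const_smul _ (g.smooth i)]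
        simp [norm_smul]
      _ ≤ |ε| * (S 1 + ∑ i ∈ Finset.range (l + 1), S i) := by
        gcongr
        · exact pow_le_of_le_one (abs_nonneg ε) hε hi₀
        · linarith [norm_iteratedFDeriv_le_seminorm ℝ g i (ε • x), hS 1]
      _ ≤ |ε| * (S 1 + ∑ i ∈ Finset.range (l + 1), S i) * (1 + ‖x‖) :=
        le_mul_of_one_le_right (mul_nonneg (abs_nonneg ε) (by linarith [hS 1, hS i]))
          (by linarith [norm_nonneg x])

theorem tendsto_smulLeftCLM_comp_smul (g : 𝓢(E, ℝ)) (f : 𝓢(E, F)) :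
    Tendsto (fun ε : ℝ ↦ smulLeftCLM F (fun x ↦ g (ε • x)) f) (𝓝 0) (𝓝 (g 0 • f)) := by
  rw [(schwartz_withSeminorms ℝ E F).tendsto_nhds]
  rintro ⟨k, l⟩ δ hδ
  obtain ⟨B, hB⟩ := exists_norm_iteratedFDeriv_comp_smul_sub_le g l
  set L := ContinuousLinearMap.lsmul ℝ ℝ (E := F)
  set K := ‖L‖ * B * 2 ^ (k + 1 + l) *
    (Finset.Iic (k + 1, l)).sup (schwartzSeminormFamily ℝ E F) f
  have hbound : ∀ ε : ℝ, |ε| ≤ 1 →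
      SchwartzMap.seminorm ℝ k l (smulLeftCLM F (fun x ↦ g (ε • x)) f - g 0 • f) ≤ |ε| * K := by
    intro ε hε
    have hgrowth : (fun x ↦ g (ε • x)).HasTemperateGrowth := by fun_prop
    have hcoe : ⇑(smulLeftCLM F (fun x ↦ g (ε • x)) f - g 0 • f) =
        fun x ↦ L (g (ε • x) - g 0) (f x) := by
      ext x
      simp [smulLeftCLM_apply_apply hgrowth, L]
    have hpoint (x : E) := pow_mul_norm_iteratedFDeriv_bilin_le L (k := k)
      (hgrowth.1.sub contDiff_const) f fun i hi ↦ hB ε hε i hi x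
    have hK : ‖L‖ * (|ε| * B) * 2 ^ (k + 1 + l) *
        (Finset.Iic (k + 1, l)).sup (schwartzSeminormFamily ℝ E F) f = |ε| * K := by ring
    simp only [hK, ← hcoe] at hpoint
    exact seminorm_le_bound ℝ k l _ ((by positivity : (0 : ℝ) ≤ _).trans (hpoint 0)) hpoint
  have hlim : Tendsto (fun ε : ℝ ↦ |ε| * K) (𝓝 0) (𝓝 0) :=
    Continuous.tendsto' (by fun_prop) _ _ (by simp)
  have hsmall : ∀ᶠ ε : ℝ in 𝓝 0, |ε| ≤ 1 :=
    (continuous_abs.tendsto' (0 : ℝ) 0 abs_zero).eventually_le_const one_pos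
  filter_upwards [hlim.eventually_lt_const hδ, hsmall] with ε hε₁ hε₂
  exact (hbound ε hε₂).trans_lt hε₁

end Multiplication

section Gaussian

variable {E : Type*} [NormedAddCommGroup E] [NormedSpace ℝ E]

lemma one_add_pow_mul_exp_neg_le {r s c : ℝ} (hr : 0 ≤ r) (h : r ≤ s + c) (N : ℕ) :
    (1 + r) ^ N * Real.exp (-s) ≤ N.factorial * Real.exp (1 + c) := by
  have hpow : (1 + r) ^ N ≤ N.factorial * Real.exp (1 + r) := by
    rw [← div_le_iff₀' (by positivity)]
    exact Real.pow_div_factorial_le_exp (1 + r) (by positivity) N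
  calc (1 + r) ^ N * Real.exp (-s)
    _ ≤ N.factorial * Real.exp (1 + r) * Real.exp (-s) := by gcongr
    _ = N.factorial * Real.exp (1 + (r - s)) := by rw [mul_assoc, ← Real.exp_add]; ring_nf
    _ ≤ N.factorial * Real.exp (1 + c) := by gcongr; linarith

lemma norm_iteratedFDeriv_exp_neg_le {p : E → ℝ} (hp : ContDiff ℝ ∞ p) {l K : ℕ} {C : ℝ}
    (hC : 1 ≤ C) {x : E} (hbound : ∀ i ≤ l, ‖iteratedFDeriv ℝ i p x‖ ≤ C * (1 + ‖x‖) ^ K) :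
    ‖iteratedFDeriv ℝ l (fun y ↦ Real.exp (-p y)) x‖ ≤
      l.factorial * C ^ l * ((1 + ‖x‖) ^ (K * l) * Real.exp (-p x)) := by
  have hD : 1 ≤ C * (1 + ‖x‖) ^ K := one_le_mul_of_one_le_of_one_le hC
    (one_le_pow₀ (by linarith [norm_nonneg x]))
  calc ‖iteratedFDeriv ℝ l (fun y ↦ Real.exp (-p y)) x‖
    _ ≤ l.factorial * Real.exp (-p x) * (C * (1 + ‖x‖) ^ K) ^ l := by
      refine norm_iteratedFDeriv_comp_le (N := (⊤ : ℕ∞)) Real.contDiff_exp hp.neg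
        (mod_cast le_top) x (fun i _ ↦ ?_) fun i hi hil ↦ ?_
      · simp [norm_iteratedFDeriv_eq_norm_iteratedDeriv, iteratedDeriv_eq_iterate]
      · rw [← Pi.neg_def, iteratedFDeriv_neg_apply, norm_neg]
        exact (hbound i hil).trans (le_self_pow₀ hD (by lia))
    _ = l.factorial * C ^ l * ((1 + ‖x‖) ^ (K * l) * Real.exp (-p x)) := by
      rw [mul_pow, ← pow_mul]; ring

/-- The Schwartz function `exp (-p)`, for a phase `p` of temperate growth bounded below by the
norm up to a constant. -/
def expNeg (p : E → ℝ) (hp : p.HasTemperateGrowth) (hp' : ∃ c, ∀ x, ‖x‖ ≤ p x + c) :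
    𝓢(E, ℝ) where
  toFun x := Real.exp (-p x)
  smooth' := hp.1.neg.exp
  decay' k l := by
    obtain ⟨c, hc⟩ := hp'
    obtain ⟨K, C, hC, hbound⟩ := hp.norm_iteratedFDeriv_le_uniform l
    have hbound' (x : E) : ∀ i ≤ l, ‖iteratedFDeriv ℝ i p x‖ ≤ (C + 1) * (1 + ‖x‖) ^ K :=
      fun i hi ↦ (hbound i hi x).trans (by gcongr; linarith)
    refine ⟨l.factorial * (C + 1) ^ l * ((k + K * l).factorial * Real.exp (1 + c)), fun x ↦ ?_⟩
    calc ‖x‖ ^ k * ‖iteratedFDeriv ℝ l (fun y ↦ Real.exp (-p y)) x‖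
      _ ≤ (1 + ‖x‖) ^ k *
          (l.factorial * (C + 1) ^ l * ((1 + ‖x‖) ^ (K * l) * Real.exp (-p x))) := by
        gcongr
        · linarith
        · exact norm_iteratedFDeriv_exp_neg_le hp.1 (by linarith) (hbound' x)
      _ = l.factorial * (C + 1) ^ l * ((1 + ‖x‖) ^ (k + K * l) * Real.exp (-p x)) := by ring
      _ ≤ l.factorial * (C + 1) ^ l * ((k + K * l).factorial * Real.exp (1 + c)) :=
        mul_le_mul_of_nonneg_left (one_add_pow_mul_exp_neg_le (norm_nonneg x) (hc x) _)
          (by positivity)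

variable {V : Type*} [NormedAddCommGroup V] [InnerProductSpace ℝ V]

/-- The Gaussian `x ↦ exp (-a‖x‖²)` as a Schwartz function. -/
def gaussian {a : ℝ} (ha : 0 < a) : 𝓢(V, ℝ) :=
  expNeg (fun x ↦ a * ‖x‖ ^ 2) (by fun_prop) ⟨1 / (4 * a), fun x ↦ by
    have hsq : a * ‖x‖ ^ 2 + 1 / (4 * a) - ‖x‖ = a * (‖x‖ - 1 / (2 * a)) ^ 2 := by
      field_simp
      ring
    linarith [show 0 ≤ a * (‖x‖ - 1 / (2 * a)) ^ 2 by positivity]⟩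

lemma gaussian_apply {a : ℝ} (ha : 0 < a) (x : V) :
    gaussian ha x = Real.exp (-(a * ‖x‖ ^ 2)) := rfl

end Gaussian

section Growth

lemma integrable_one_add_norm_pow_mul_norm {E F : Type*} [NormedAddCommGroup E]
    [NormedSpace ℝ E] [MeasurableSpace E] [BorelSpace E] [SecondCountableTopology E]
    [NormedAddCommGroup F] [NormedSpace ℝ F] {μ : Measure E} [μ.HasTemperateGrowth]
    (φ : 𝓢(E, F)) (N : ℕ) : Integrable (fun x ↦ (1 + ‖x‖) ^ N * ‖φ x‖) μ := by
  have hexpand (x : E) : (1 + ‖x‖) ^ N * ‖φ x‖ =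
      ∑ i ∈ Finset.range (N + 1), N.choose i * (‖x‖ ^ i * ‖φ x‖) := by
    rw [add_comm, add_pow, Finset.sum_mul]
    exact Finset.sum_congr rfl fun i _ ↦ by ring
  simp_rw [hexpand]
  exact integrable_finsetSum _ fun i _ ↦ (φ.integrable_pow_mul μ i).const_mul _

variable {V F G : Type*} [NormedAddCommGroup V] [InnerProductSpace ℝ V] [FiniteDimensional ℝ V]
  [MeasurableSpace V] [BorelSpace V] [NormedAddCommGroup F] [NormedSpace ℂ F]
  [NormedAddCommGroup G] [NormedSpace ℝ G]

lemma norm_iteratedFDeriv_fourier_le {f : V → F} (hf : AEStronglyMeasurable f) {j N : ℕ}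
    (hfN : Integrable fun v ↦ (1 + ‖v‖) ^ N * ‖f v‖) (hj : j ≤ N) (w : V) :
    ‖iteratedFDeriv ℝ j (𝓕 f) w‖ ≤ (2 * π) ^ j * ∫ v, (1 + ‖v‖) ^ N * ‖f v‖ := by
  have hle (i : ℕ) (hi : i ≤ N) (v : V) : ‖v‖ ^ i * ‖f v‖ ≤ (1 + ‖v‖) ^ N * ‖f v‖ := by
    have hv : (0 : ℝ) ≤ ‖v‖ := norm_nonneg v
    gcongr ?_ * _
    exact (pow_le_pow_left₀ hv (by linarith) i).trans (pow_le_pow_right₀ (by linarith) hi)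
  have hmoment (i : ℕ) (hi : (i : ℕ∞) ≤ N) : Integrable fun v ↦ ‖v‖ ^ i * ‖f v‖ :=
    hfN.mono' (by fun_prop) (.of_forall fun v ↦ by
      simpa [abs_of_nonneg] using hle i (mod_cast hi) v)
  rw [Real.iteratedFDeriv_fourier hmoment hf (mod_cast hj), ← integral_const_mul]
  refine (VectorFourier.norm_fourierIntegral_le_integral_norm _ _ _ _ _).trans
    (integral_mono_of_nonneg (.of_forall fun v ↦ norm_nonneg _) (hfN.const_mul _)
      (.of_forall fun v ↦ ?_))
  calc ‖VectorFourier.fourierPowSMulRight (innerSL ℝ) f v j‖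
    _ ≤ (2 * π * ‖innerSL ℝ (E := V)‖) ^ j * ‖v‖ ^ j * ‖f v‖ :=
      VectorFourier.norm_fourierPowSMulRight_le _ _ _ _
    _ ≤ (2 * π * 1) ^ j * ‖v‖ ^ j * ‖f v‖ := by gcongr; exact norm_innerSL_le ℝ
    _ = (2 * π) ^ j * (‖v‖ ^ j * ‖f v‖) := by ring
    _ ≤ (2 * π) ^ j * ((1 + ‖v‖) ^ N * ‖f v‖) :=
      mul_le_mul_of_nonneg_left (hle j hj v) (by positivity)

lemma exists_seminorm_smulLeftCLM_fourier_le (g : 𝓢(V, ℝ)) (k l : ℕ) :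
    ∃ D, 0 ≤ D ∧ ∀ N ≥ l, ∀ φ : 𝓢(V, F),
      SchwartzMap.seminorm ℝ k l (smulLeftCLM F g (𝓕 φ)) ≤
        D * ∫ v, (1 + ‖v‖) ^ N * ‖φ v‖ := by
  set B := (ContinuousLinearMap.lsmul ℝ ℝ (E := F)).flip
  refine ⟨‖B‖ * (2 * π) ^ l * 2 ^ (k + 0 + l) *
    (Finset.Iic (k + 0, l)).sup (schwartzSeminormFamily ℝ V ℝ) g, by positivity,
    fun N hN φ ↦ ?_⟩
  set I := ∫ v, (1 + ‖v‖) ^ N * ‖φ v‖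
  have : 0 ≤ I := integral_nonneg fun v ↦ by positivity
  have hderiv (x : V) (i : ℕ) (hi : i ≤ l) :
      ‖iteratedFDeriv ℝ i (𝓕 φ : 𝓢(V, F)) x‖ ≤ (2 * π) ^ l * I * (1 + ‖x‖) ^ 0 := by
    rw [pow_zero, mul_one, fourier_coe]
    refine (norm_iteratedFDeriv_fourier_le φ.continuous.aestronglyMeasurable
      (integrable_one_add_norm_pow_mul_norm φ N) (hi.trans hN) x).trans ?_
    gcongr
    linarith [Real.pi_gt_three]
  refine seminorm_le_bound ℝ k l _ (by positivity) fun x ↦ ?_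
  rw [smulLeftCLM_apply g.hasTemperateGrowth]
  exact (pow_mul_norm_iteratedFDeriv_bilin_le B ((𝓕 φ : 𝓢(V, F)).smooth ⊤) g
    (hderiv x)).trans_eq (by ring)

theorem exists_norm_fourierMultiplierCLM_le (g : 𝓢(V, ℝ)) (L : 𝓢(V, F) →L[ℝ] G) :
    ∃ (C : ℝ) (N : ℕ), ∀ φ : 𝓢(V, F),
      ‖L (fourierMultiplierCLM F g φ)‖ ≤ C * ∫ v, (1 + ‖v‖) ^ N * ‖φ v‖ := by
  let L' : 𝓢(V, F) →L[ℝ] G := L ∘L fourierInvCLM ℝ 𝓢(V, F)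
  obtain ⟨s, C, -, hC⟩ := Seminorm.bound_of_continuous (schwartz_withSeminorms ℝ V F)
    ((normSeminorm ℝ G).comp L'.toLinearMap) L'.continuous.norm
  choose D hD₀ hD using fun p : ℕ × ℕ ↦
    exists_seminorm_smulLeftCLM_fourier_le (F := F) g p.1 p.2
  set N := s.sup Prod.snd
  have hsum : 0 ≤ ∑ p ∈ s, D p := s.sum_nonneg fun p _ ↦ hD₀ p
  refine ⟨C * ∑ p ∈ s, D p, N, fun φ ↦ ?_⟩
  set I := ∫ v, (1 + ‖v‖) ^ N * ‖φ v‖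
  have hI : 0 ≤ I := integral_nonneg fun v ↦ by positivity
  have hterm (p) (hp : p ∈ s) :
      schwartzSeminormFamily ℝ V F p (smulLeftCLM F g (𝓕 φ)) ≤ (∑ p ∈ s, D p) * I :=
    (hD p N (Finset.le_sup (f := Prod.snd) hp) φ).trans
      (mul_le_mul_of_nonneg_right (Finset.single_le_sum (fun p _ ↦ hD₀ p) hp) hI)
  calc ‖L (fourierMultiplierCLM F g φ)‖
    _ ≤ C * s.sup (schwartzSeminormFamily ℝ V F) (smulLeftCLM F g (𝓕 φ)) := hC _
    _ ≤ C * ((∑ p ∈ s, D p) * I) := mul_le_mul_of_nonneg_left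
      (Seminorm.finset_sup_apply_le (mul_nonneg hsum hI) hterm) C.2
    _ = C * (∑ p ∈ s, D p) * I := by ring

end Growth

section Domination

variable {E : Type*} [NormedAddCommGroup E] [NormedSpace ℝ E] [FiniteDimensional ℝ E]
  [HasContDiffBump E] [MeasurableSpace E] [BorelSpace E] {μ : Measure E} [μ.IsAddHaarMeasure]

lemma ae_nonneg_of_forall_integral_contDiff_mul_nonneg {f : E → ℝ} (hf : LocallyIntegrable f μ)
    (h : ∀ φ : E → ℝ, ContDiff ℝ ∞ φ → HasCompactSupport φ → (∀ x, 0 ≤ φ x) →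
      0 ≤ ∫ x, φ x * f x ∂μ) : 0 ≤ᵐ[μ] f := by
  let r (k : ℕ) : ℝ := 1 / (k + 1)
  let b (k : ℕ) : ContDiffBump (0 : E) :=
    ⟨r k, 2 * r k, by positivity, by linarith [show 0 < r k by positivity]⟩
  have hb : Tendsto (fun k ↦ (b k).rOut) atTop (𝓝 0) := by
    simpa only [mul_zero] using tendsto_one_div_add_atTop_nhds_zero_nat.const_mul (2 : ℝ)
  filter_upwards [ContDiffBump.ae_convolution_tendsto_right_of_locallyIntegrable hb
    (.of_forall fun k ↦ le_rfl) hf] with x hx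
  refine ge_of_tendsto' hx fun k ↦ ?_
  rw [convolution_eq_swap]
  exact h (fun y ↦ (b k).normed μ (x - y))
    ((b k).contDiff_normed.comp (by fun_prop))
    ((b k).hasCompactSupport_normed.comp_homeomorph (Homeomorph.subLeft x))
    fun y ↦ (b k).nonneg_normed _

lemma ae_le_of_forall_integral_mul_le {f g : E → ℝ} (hf : LocallyIntegrable f μ)
    (hg : LocallyIntegrable g μ)
    (h : ∀ φ : 𝓢(E, ℝ), HasCompactSupport φ → (∀ x, 0 ≤ φ x) →
      ∫ x, f x * φ x ∂μ ≤ ∫ x, g x * φ x ∂μ) : f ≤ᵐ[μ] g := by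
  have hsub : 0 ≤ᵐ[μ] g - f := by
    refine ae_nonneg_of_forall_integral_contDiff_mul_nonneg (hg.sub hf) fun φ hφ hc hφ₀ ↦ ?_
    have hint {w : E → ℝ} (hw : LocallyIntegrable w μ) : Integrable (fun x ↦ w x * φ x) μ := by
      simpa [mul_comm] using hw.integrable_smul_left_of_hasCompactSupport hφ.continuous hc
    have hfg := h (hc.toSchwartzMap hφ) hc hφ₀
    simpa [mul_comm (φ _), sub_mul, integral_sub (hint hg) (hint hf)] using hfg
  filter_upwards [hsub] with x hx using sub_nonneg.mp hx

variable {w : E → ℝ} {C : ℝ} {N : ℕ}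

lemma ae_abs_le_of_forall_abs_integral_mul_le (hw : LocallyIntegrable w μ)
    (h : ∀ φ : 𝓢(E, ℝ), |∫ x, w x * φ x ∂μ| ≤ C * ∫ x, (1 + ‖x‖) ^ N * ‖φ x‖ ∂μ) :
    ∀ᵐ x ∂μ, |w x| ≤ C * (1 + ‖x‖) ^ N := by
  have hweight : LocallyIntegrable (fun x ↦ C * (1 + ‖x‖) ^ N) μ :=
    Continuous.locallyIntegrable (by fun_prop)
  have hbound (φ : 𝓢(E, ℝ)) (hφ : ∀ x, 0 ≤ φ x) :
      |∫ x, w x * φ x ∂μ| ≤ ∫ x, C * (1 + ‖x‖) ^ N * φ x ∂μ := by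
    simpa only [mul_assoc, integral_const_mul, Real.norm_of_nonneg (hφ _)] using h φ
  have hupper := ae_le_of_forall_integral_mul_le hw hweight
    fun φ _ hφ ↦ (le_abs_self _).trans (hbound φ hφ)
  have hlower := ae_le_of_forall_integral_mul_le hw.neg hweight fun φ _ hφ ↦ by
    simpa [integral_neg] using (neg_le_abs _).trans (hbound φ hφ)
  filter_upwards [hupper, hlower] with x hx₁ hx₂ using abs_le'.mpr ⟨hx₁, hx₂⟩

theorem integrable_mul_of_forall_abs_integral_mul_le (hw : LocallyIntegrable w μ)
    (h : ∀ φ : 𝓢(E, ℝ), |∫ x, w x * φ x ∂μ| ≤ C * ∫ x, (1 + ‖x‖) ^ N * ‖φ x‖ ∂μ)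
    (φ : 𝓢(E, ℝ)) : Integrable (fun x ↦ w x * φ x) μ := by
  refine ((integrable_one_add_norm_pow_mul_norm φ N).const_mul C).mono'
    (hw.aestronglyMeasurable.mul φ.continuous.aestronglyMeasurable) ?_
  filter_upwards [ae_abs_le_of_forall_abs_integral_mul_le hw h] with x hx
  rw [norm_mul, ← mul_assoc]
  gcongr
  exact hx

end Domination

section HeatFlow

variable {V : Type*} [NormedAddCommGroup V] [InnerProductSpace ℝ V]

/-- The Fourier multiplier of `e^{tΔ}`, in the normalization `𝓕 f ξ = ∫ e^{-2πi⟨x, ξ⟩} f x dx`. -/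
def heatSymbol (t : ℝ) (ξ : V) : ℝ := Real.exp (-(4 * π ^ 2 * t * ‖ξ‖ ^ 2))

lemma heatSymbol_eq_gaussian_smul {t : ℝ} (ht : 0 ≤ t) :
    heatSymbol (V := V) t = fun ξ ↦ gaussian one_pos ((2 * π * √t) • ξ) := by
  ext ξ
  rw [heatSymbol, gaussian_apply, norm_smul, mul_pow, Real.norm_eq_abs, sq_abs, mul_pow,
    Real.sq_sqrt ht]
  ring_nf

variable [FiniteDimensional ℝ V] [MeasurableSpace V] [BorelSpace V]

/-- The heat semigroup `e^{tΔ}` on real Schwartz functions, as a Fourier multiplier. -/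
def heatFlow (t : ℝ) : 𝓢(V, ℝ) →L[ℝ] 𝓢(V, ℝ) :=
  postcompCLM Complex.reCLM ∘L fourierMultiplierCLM ℂ (heatSymbol t) ∘L
    postcompCLM Complex.ofRealCLM

theorem tendsto_heatFlow (φ : 𝓢(V, ℝ)) :
    Tendsto (fun t ↦ heatFlow t φ) (𝓝[>] 0) (𝓝 φ) := by
  set Φ : 𝓢(V, ℂ) := postcompCLM Complex.ofRealCLM φ
  let L : 𝓢(V, ℂ) →L[ℝ] 𝓢(V, ℝ) :=
    postcompCLM Complex.reCLM ∘L fourierInvCLM ℝ 𝓢(V, ℂ)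
  have hscale : Tendsto (fun t ↦ 2 * π * √t) (𝓝[>] 0) (𝓝 0) :=
    (Continuous.tendsto' (by fun_prop) _ _ (by simp)).mono_left nhdsWithin_le_nhds
  have hlim := (L.continuous.tendsto _).comp
    ((tendsto_smulLeftCLM_comp_smul (gaussian (V := V) one_pos) (𝓕 Φ)).comp hscale)
  have hL : L (gaussian (V := V) one_pos 0 • 𝓕 Φ) = φ := by
    ext x
    simp [L, Φ, gaussian_apply]
  rw [hL] at hlim
  refine hlim.congr' ?_
  filter_upwards [self_mem_nhdsWithin] with t ht
  simp only [Function.comp_apply, ← heatSymbol_eq_gaussian_smul (le_of_lt ht)]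
  rfl

lemma exists_norm_heatFlow_le {G : Type*} [NormedAddCommGroup G] [NormedSpace ℝ G] {t : ℝ}
    (ht : 0 < t) (L : 𝓢(V, ℝ) →L[ℝ] G) :
    ∃ (C : ℝ) (N : ℕ), ∀ φ : 𝓢(V, ℝ),
      ‖L (heatFlow t φ)‖ ≤ C * ∫ x, (1 + ‖x‖) ^ N * ‖φ x‖ := by
  obtain ⟨C, N, h⟩ := exists_norm_fourierMultiplierCLM_le
    (gaussian (a := 4 * π ^ 2 * t) (by positivity)) (L ∘L postcompCLM Complex.reCLM)
  exact ⟨C, N, fun φ ↦ by simpa using! h (postcompCLM Complex.ofRealCLM φ)⟩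

end HeatFlow

section HeatKernel

variable {V F : Type*} [NormedAddCommGroup V] [InnerProductSpace ℝ V] [FiniteDimensional ℝ V]
  [MeasurableSpace V] [BorelSpace V] [NormedAddCommGroup F] [NormedSpace ℂ F] [CompleteSpace F]

lemma fourierMultiplierCLM_eq_integral (g : 𝓢(V, ℂ)) (f : 𝓢(V, F)) (x : V) :
    fourierMultiplierCLM F g f x = ∫ y, 𝓕⁻ (g : V → ℂ) (x - y) • f y := by
  let B := ContinuousLinearMap.lsmul ℂ ℂ (E := F)
  have hconv : fourierMultiplierCLM F g f = convolution B (𝓕⁻ g) f := by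
    rw [fourierMultiplierCLM_apply, ← fourierInv_fourier_eq (F := 𝓢(V, F)) (convolution B _ f),
      fourier_convolution, fourier_fourierInv_eq]
    congr 1
    ext ξ
    simp [smulLeftCLM_apply_apply g.hasTemperateGrowth, B]
  rw [hconv, convolution_apply, convolution_eq_swap, fourierInv_coe]
  rfl

/-- The kernel of `e^{tΔ}` on a Euclidean space. -/
def heatKernel (t : ℝ) (x : V) : ℝ :=
  (4 * π * t) ^ (-(Module.finrank ℝ V : ℝ) / 2) * Real.exp (-‖x‖ ^ 2 / (4 * t))

lemma fourierInv_heatSymbol {t : ℝ} (ht : 0 < t) (x : V) :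
    𝓕⁻ (fun ξ : V ↦ (heatSymbol t ξ : ℂ)) x = heatKernel t x := by
  have hb : 0 < ((4 * π ^ 2 * t : ℝ) : ℂ).re := by rw [Complex.ofReal_re]; positivity
  have hπ : (π : ℂ) ≠ 0 := mod_cast Real.pi_ne_zero
  have ht' : (t : ℂ) ≠ 0 := mod_cast ht.ne'
  have hsymbol : (fun ξ : V ↦ (heatSymbol t ξ : ℂ)) =
      fun ξ ↦ Complex.exp (-((4 * π ^ 2 * t : ℝ) : ℂ) * ‖ξ‖ ^ 2) := by
    ext ξ
    simp [heatSymbol]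
  rw [hsymbol, Real.fourierInv_eq_fourier_neg, fourier_gaussian_innerProductSpace hb, norm_neg,
    heatKernel, neg_div, Real.rpow_neg (by positivity), ← Real.inv_rpow (by positivity)]
  push_cast
  rw [Complex.ofReal_cpow (by positivity)]
  push_cast
  congr 2 <;> field_simp

theorem heatFlow_apply {t : ℝ} (ht : 0 < t) (φ : 𝓢(V, ℝ)) (x : V) :
    heatFlow t φ x = ∫ y, heatKernel t (x - y) * φ y := by
  let Φ : 𝓢(V, ℂ) := postcompCLM Complex.ofRealCLM φ
  let G : 𝓢(V, ℂ) := postcompCLM Complex.ofRealCLM (gaussian (a := 4 * π ^ 2 * t) (by positivity))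
  have hG : fourierMultiplierCLM ℂ (heatSymbol t) Φ = fourierMultiplierCLM ℂ G Φ :=
    (fourierMultiplierCLM_ofReal ℂ (gaussian _).hasTemperateGrowth Φ).symm
  calc heatFlow t φ x
    _ = (fourierMultiplierCLM ℂ G Φ x).re := by rw [← hG]; rfl
    _ = (∫ y, ((heatKernel t (x - y) * φ y : ℝ) : ℂ)).re := by
      rw [fourierMultiplierCLM_eq_integral]
      simp_rw [Complex.ofReal_mul, ← fourierInv_heatSymbol ht]
      rfl
    _ = ∫ y, heatKernel t (x - y) * φ y := by rw [integral_complex_ofReal, Complex.ofReal_re]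

end HeatKernel

theorem heat_initial_continuity_general {V : Type*} [NormedAddCommGroup V]
    [InnerProductSpace ℝ V] [FiniteDimensional ℝ V] [MeasurableSpace V] [BorelSpace V]
    {T : ℝ≥0∞} (hT : 0 < T) {u : ℝ → V → ℝ}
    (hu : ∀ t, 0 < t → ENNReal.ofReal t < T → LocallyIntegrable (u t)) (u₀ : 𝓢(V, ℝ) →L[ℝ] ℝ)
    (hu₀ : ∀ t, 0 < t → ENNReal.ofReal t < T → ∀ φ : 𝓢(V, ℝ),
      ∫ x, u t x * φ x = u₀ (heatFlow t φ)) :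
    (∀ t, 0 < t → ENNReal.ofReal t < T →
      ∃ v : 𝓢(V, ℝ) →L[ℝ] ℝ, ∀ φ : 𝓢(V, ℝ),
        Integrable (fun x ↦ u t x * φ x) ∧ v φ = ∫ x, u t x * φ x) ∧
    ∀ φ : 𝓢(V, ℝ), Tendsto (fun t ↦ ∫ x, u t x * φ x) (𝓝[>] 0) (𝓝 (u₀ φ)) := by
  constructor
  · intro t ht htT
    obtain ⟨C, N, hbound⟩ := exists_norm_heatFlow_le ht u₀
    refine ⟨u₀ ∘L heatFlow t, fun φ ↦ ⟨?_, (hu₀ t ht htT φ).symm⟩⟩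
    refine integrable_mul_of_forall_abs_integral_mul_le (C := C) (N := N) (hu t ht htT)
      (fun ψ ↦ ?_) φ
    rw [hu₀ t ht htT ψ]
    exact hbound ψ
  · intro φ
    have hsmall : ∀ᶠ t in 𝓝[>] (0 : ℝ), ENNReal.ofReal t < T :=
      ((ENNReal.continuous_ofReal.tendsto' 0 0 ENNReal.ofReal_zero).eventually_lt_const hT
        ).filter_mono nhdsWithin_le_nhds
    refine ((u₀.continuous.tendsto φ).comp (tendsto_heatFlow φ)).congr' ?_
    filter_upwards [hsmall, self_mem_nhdsWithin] with t htT ht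
    exact (hu₀ t ht htT φ).symm

/-- Under the hypotheses of the representation theorem, with `u₀` the tempered distribution
such that `u(t) = e^{tΔ}u₀` for `0 < t < T`: for each `t ∈ (0,T)` the function `x ↦ u(t,x)`
defines a tempered distribution, and `u(t) → u₀` in `𝒮'(ℝⁿ)` as `t → 0⁺`, i.e.
`∫ u(t,x)φ(x) dx → ⟨u₀, φ⟩` for every Schwartz `φ`. -/
theorem heat_initial_continuity
    (n : ℕ) (T : ℝ≥0∞) (hT : 0 < T) (γ : ℝ) (hγ : γ ∈ Set.Ioo (0 : ℝ) (1/4))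
    (u : ℝ → ES n → ℝ)
    (hu_smooth : ContDiffOn ℝ (⊤ : ℕ∞) (fun p : ℝ × ES n => u p.1 p.2)
      {p : ℝ × ES n | 0 < p.1 ∧ ENNReal.ofReal p.1 < T})
    (hu_heat : ∀ (t : ℝ) (x : ES n), 0 < t → ENNReal.ofReal t < T →
      HasDerivAt (fun τ => u τ x) (heatLap n (u t) x) t)
    -- Size condition
    (hsize : ∀ a b : ℝ, 0 < a → a < b → ENNReal.ofReal b < T → ∃ C > 0, ∀ R > 0,
      Real.sqrt (∫ t in Set.Ioo a b, ∫ x in Metric.ball (0 : ES n) R, (u t x) ^ 2) ≤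
        C * Real.exp (γ * R ^ 2 / (b - a)))
    -- Uniform control
    (hinit : ∃ tk : ℕ → ℝ, (∀ k, 0 < tk k ∧ ENNReal.ofReal (tk k) < T) ∧
      Tendsto tk atTop (nhds 0) ∧
      ∀ φ : SchwartzMap (ES n) ℝ,
        (∀ k, Integrable (fun x => u (tk k) x * φ x)) ∧
        ∃ A : ℝ, ∀ k, |∫ x, u (tk k) x * φ x| ≤ A)
    -- u₀ is the tempered distribution with u(t) = e^{tΔ}u₀ for all 0 < t < T
    (u₀ : SchwartzMap (ES n) ℝ →L[ℝ] ℝ)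
    (hu₀ : ∀ t : ℝ, 0 < t → ENNReal.ofReal t < T →
      ∀ φ ψ : SchwartzMap (ES n) ℝ, (∀ x, ψ x = heatOp n t (⇑φ) x) →
        (∫ x, u t x * φ x) = u₀ ψ) :
    (∀ t : ℝ, 0 < t → ENNReal.ofReal t < T →
      ∃ v : SchwartzMap (ES n) ℝ →L[ℝ] ℝ, ∀ φ : SchwartzMap (ES n) ℝ,
        Integrable (fun x => u t x * φ x) ∧ v φ = ∫ x, u t x * φ x) ∧
    (∀ φ : SchwartzMap (ES n) ℝ,
      Tendsto (fun t => ∫ x, u t x * φ x) (nhdsWithin 0 (Set.Ioi 0)) (nhds (u₀ φ))) := by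
  have hcont (t : ℝ) (ht : 0 < t) (htT : ENNReal.ofReal t < T) : Continuous (u t) :=
    hu_smooth.continuousOn.comp_continuous (f := fun x ↦ (t, x)) (by fun_prop) fun x ↦ ⟨ht, htT⟩
  exact heat_initial_continuity_general hT
    (fun t ht htT ↦ (hcont t ht htT).locallyIntegrable) u₀
    fun t ht htT φ ↦ hu₀ t ht htT φ (heatFlow t φ) fun x ↦ by
      simp [heatFlow_apply ht, heatKernel, heatOp]

end
end

section
/- (Caccioppoli inequality for the heat equation.) There is a constant c(n) > 0 with the following property. Let a < s ≤ t < b be real numbers, let u be a smooth function on (a,b) × ℝⁿ solving the heat equation ∂ₜu = Δu, and let x₀ ∈ ℝⁿ, 0 < r < ρ. Then ∫ₛᵗ ∫_{B(x₀,r)} |∇u(τ,x)|² dτ dx ≤ c(n) · ( 1/(ρ−r)² + 1/(s−a) ) · ∫ₐᵇ ∫_{B(x₀,ρ)} |u(τ,x)|² dτ dx, whenever the right-hand side is finite. -/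
open MeasureTheory Metric Filter Set
open scoped Real ENNReal Topology

noncomputable section

/-! Testing the equation against `φ² u`, where `φ` is a spatial cutoff, gives
`∫_σ^t ∫ φ² |∇u|² ≤ ∫ φ² u(σ)² + 4 ∫_σ^t ∫ |∇φ|² u²`
for every initial time `σ`: the cross term `2 φ u ∇φ · ∇u` is absorbed by completing a square, and
the energy at time `t` is discarded. No cutoff in time is needed, because `σ` may be chosen in
`(a, s)` so that the energy at time `σ` is at most its mean over `(a, s)`, which is where the
factor `1 / (s - a)` comes from. -/

section Integrability

variable {X Y : Type*} [MeasurableSpace X] [MeasurableSpace Y] {μ : Measure X} {ν : Measure Y}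

lemma integrable_mul_of_continuousOn [TopologicalSpace Y] [OpensMeasurableSpace Y] [T2Space Y]
    [IsFiniteMeasureOnCompacts ν] {w g : Y → ℝ} {K Ω : Set Y} (hK : IsCompact K) (hKΩ : K ⊆ Ω)
    (hw : Continuous w) (hw0 : ∀ y ∉ K, w y = 0) (hg : ContinuousOn g Ω) :
    Integrable (fun y => w y * g y) ν := by
  have hsupp : Function.support (fun y => w y * g y) ⊆ K :=
    Function.support_subset_iff'.2 fun y hy => by simp [hw0 y hy]
  exact (integrableOn_iff_integrable_of_support_subset hsupp).1
    ((hw.continuousOn.mul (hg.mono hKΩ)).integrableOn_compact hK)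

lemma integrable_prod_mul_of_continuousOn [TopologicalSpace X] [TopologicalSpace Y]
    [OpensMeasurableSpace X] [OpensMeasurableSpace (X × Y)] [T2Space X] [T2Space Y]
    [SFinite μ] [SFinite ν] [IsFiniteMeasureOnCompacts (μ.prod ν)]
    {I L : Set X} {K Ω : Set Y} {w : Y → ℝ} {g : X × Y → ℝ}
    (hL : IsCompact L) (hLI : L ⊆ I) (hK : IsCompact K) (hKΩ : K ⊆ Ω)
    (hw : Continuous w) (hw0 : ∀ y ∉ K, w y = 0) (hg : ContinuousOn g (I ×ˢ Ω)) :
    Integrable (fun p : X × Y => w p.2 * g p) ((μ.restrict L).prod ν) := by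
  have hLK : IntegrableOn (fun p : X × Y => w p.2 * g p) (L ×ˢ K) (μ.prod ν) :=
    ((hw.comp continuous_snd).continuousOn.mul
      (hg.mono (prod_mono hLI hKΩ))).integrableOn_compact (hL.prod hK)
  have hLuniv : IntegrableOn (fun p : X × Y => w p.2 * g p) (L ×ˢ univ) (μ.prod ν) :=
    hLK.of_forall_sdiff_eq_zero (hL.measurableSet.prod MeasurableSet.univ) fun p hp => by
      simp [hw0 p.2 fun h => hp.2 ⟨hp.1.1, h⟩]
  rwa [IntegrableOn, ← Measure.prod_restrict, Measure.restrict_univ] at hLuniv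

variable {A S : Set X} {B : Set Y} {w : Y → ℝ} {M : ℝ} {U : X × Y → ℝ}

lemma integrableOn_prod_mul_of_bounded (hU : IntegrableOn U (A ×ˢ B) (μ.prod ν))
    (hw : AEStronglyMeasurable w ν) (hwM : ∀ y, |w y| ≤ M) :
    IntegrableOn (fun p : X × Y => w p.2 * U p) (A ×ˢ B) (μ.prod ν) :=
  hU.bdd_mul hw.comp_snd.restrict (Eventually.of_forall fun p => hwM p.2)

variable [SFinite μ] [SFinite ν]

lemma integrableOn_integral_mul (hU : IntegrableOn U (A ×ˢ B) (μ.prod ν))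
    (hw : AEStronglyMeasurable w ν) (hwM : ∀ y, |w y| ≤ M) (hwB : ∀ y ∉ B, w y = 0) :
    IntegrableOn (fun x => ∫ y, w y * U (x, y) ∂ν) A μ := by
  have h := integrableOn_prod_mul_of_bounded hU hw hwM
  rw [IntegrableOn, ← Measure.prod_restrict] at h
  refine h.integral_prod_left.congr (Eventually.of_forall fun x => ?_)
  exact setIntegral_eq_integral_of_forall_compl_eq_zero fun y hy => by simp [hwB y hy]

lemma setIntegral_integral_mul_le (hU : IntegrableOn U (A ×ˢ B) (μ.prod ν)) (hU0 : ∀ p, 0 ≤ U p)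
    (hw : AEStronglyMeasurable w ν) (hw0 : ∀ y, 0 ≤ w y) (hwM : ∀ y, w y ≤ M)
    (hwB : ∀ y ∉ B, w y = 0) (hSA : S ⊆ A) :
    ∫ x in S, ∫ y, w y * U (x, y) ∂ν ∂μ ≤ M * ∫ x in A, ∫ y in B, U (x, y) ∂ν ∂μ := by
  have hwM' : ∀ y, |w y| ≤ M := fun y => (abs_of_nonneg (hw0 y)).trans_le (hwM y)
  have hwU := integrableOn_prod_mul_of_bounded hU hw hwM'
  have hwU0 : ∀ p : X × Y, 0 ≤ w p.2 * U p := fun p => mul_nonneg (hw0 p.2) (hU0 p)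
  calc ∫ x in S, ∫ y, w y * U (x, y) ∂ν ∂μ
      ≤ ∫ x in A, ∫ y, w y * U (x, y) ∂ν ∂μ :=
        setIntegral_mono_set (integrableOn_integral_mul hU hw hwM' hwB)
          (Eventually.of_forall fun x => integral_nonneg fun y => hwU0 (x, y)) hSA.eventuallyLE
    _ = ∫ x in A, ∫ y in B, w y * U (x, y) ∂ν ∂μ := by
        congr! 2 with x
        exact (setIntegral_eq_integral_of_forall_compl_eq_zero fun y hy => by simp [hwB y hy]).symm
    _ = ∫ p in A ×ˢ B, w p.2 * U p ∂μ.prod ν := (setIntegral_prod _ hwU).symm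
    _ ≤ ∫ p in A ×ˢ B, M * U p ∂μ.prod ν :=
        integral_mono hwU (hU.const_mul M) fun p => mul_le_mul_of_nonneg_right (hwM p.2) (hU0 p)
    _ = M * ∫ x in A, ∫ y in B, U (x, y) ∂ν ∂μ := by
        rw [integral_const_mul, setIntegral_prod _ hU]

lemma exists_mem_Ioo_sub_mul_le_setIntegral {a s : ℝ} {g : ℝ → ℝ} (has : a < s)
    (hg : IntegrableOn g (Ioo a s)) : ∃ σ ∈ Ioo a s, (s - a) * g σ ≤ ∫ τ in Ioo a s, g τ := by
  obtain ⟨σ, hσ, hle⟩ := exists_le_setAverage (by simp [has]) (by simp) hg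
  rw [setAverage_eq, Real.volume_real_Ioo_of_le has.le, smul_eq_mul,
    le_inv_mul_iff₀ (sub_pos.2 has)] at hle
  exact ⟨σ, hσ, hle⟩

lemma exists_mem_Ioo_integral_mul_le {a s : ℝ} {A : Set ℝ} {U : ℝ × Y → ℝ} (has : a < s)
    (hsA : Ioo a s ⊆ A) (hU : IntegrableOn U (A ×ˢ B) (volume.prod ν)) (hU0 : ∀ p, 0 ≤ U p)
    (hw : AEStronglyMeasurable w ν) (hw0 : ∀ y, 0 ≤ w y) (hwM : ∀ y, w y ≤ M)
    (hwB : ∀ y ∉ B, w y = 0) :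
    ∃ σ ∈ Ioo a s, ∫ y, w y * U (σ, y) ∂ν ≤ M / (s - a) * ∫ τ in A, ∫ y in B, U (τ, y) ∂ν := by
  obtain ⟨σ, hσ, hle⟩ := exists_mem_Ioo_sub_mul_le_setIntegral has
    ((integrableOn_integral_mul hU hw
      (fun y => (abs_of_nonneg (hw0 y)).trans_le (hwM y)) hwB).mono_set hsA)
  refine ⟨σ, hσ, ?_⟩
  rw [div_mul_eq_mul_div, le_div_iff₀' (sub_pos.2 has)]
  exact hle.trans (setIntegral_integral_mul_le hU hU0 hw hw0 hwM hwB hsA)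

end Integrability

section IntegrationByParts

variable {E : Type*} [NormedAddCommGroup E] [NormedSpace ℝ E] {Ω : Set E}

lemma hasFDerivAt_mul_of_tsupport_subset {w f : E → ℝ} (hΩ : IsOpen Ω)
    (hw : Differentiable ℝ w) (hwΩ : tsupport w ⊆ Ω) (hf : DifferentiableOn ℝ f Ω) (x : E) :
    HasFDerivAt (fun y => w y * f y) (w x • fderiv ℝ f x + f x • fderiv ℝ w x) x := by
  by_cases hx : x ∈ tsupport w
  · exact (hw x).hasFDerivAt.mul (hf.differentiableAt (hΩ.mem_nhds (hwΩ hx))).hasFDerivAt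
  · rw [image_eq_zero_of_notMem_tsupport hx, fderiv_of_notMem_tsupport (𝕜 := ℝ) hx, zero_smul,
      smul_zero, add_zero]
    refine (hasFDerivAt_const (0 : ℝ) x).congr_of_eventuallyEq ?_
    filter_upwards [notMem_tsupport_iff_eventuallyEq.1 hx] with y hy
    simp [hy]

variable [FiniteDimensional ℝ E] [MeasurableSpace E] [BorelSpace E]
  {μ : Measure E} [μ.IsAddHaarMeasure]

lemma integral_mul_mul_fderiv_eq_neg {w f g : E → ℝ} (hΩ : IsOpen Ω) (hw : ContDiff ℝ 1 w)
    (hwc : HasCompactSupport w) (hwΩ : tsupport w ⊆ Ω) (hf : ContDiffOn ℝ 1 f Ω)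
    (hg : ContDiffOn ℝ 1 g Ω) (v : E) :
    ∫ x, w x * (f x * fderiv ℝ g x v) ∂μ =
      -∫ x, (w x * fderiv ℝ f x v + f x * fderiv ℝ w x v) * g x ∂μ := by
  have hdw : Continuous fun x => fderiv ℝ w x v :=
    (hw.continuous_fderiv one_ne_zero).clm_apply continuous_const
  have hdf : ContinuousOn (fun x => fderiv ℝ f x v) Ω :=
    (hf.continuousOn_fderiv_of_isOpen hΩ le_rfl).clm_apply continuousOn_const
  have hdg : ContinuousOn (fun x => fderiv ℝ g x v) Ω :=
    (hg.continuousOn_fderiv_of_isOpen hΩ le_rfl).clm_apply continuousOn_const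
  have hw0 : ∀ x ∉ tsupport w, w x = 0 := fun _ => image_eq_zero_of_notMem_tsupport
  have hdw0 : ∀ x ∉ tsupport w, fderiv ℝ w x v = 0 := fun x hx => by
    simp [fderiv_of_notMem_tsupport (𝕜 := ℝ) hx]
  have hwf := hasFDerivAt_mul_of_tsupport_subset hΩ (hw.differentiable one_ne_zero) hwΩ
    (hf.differentiableOn one_ne_zero)
  have hdwf : ∀ x, fderiv ℝ (fun y => w y * f y) x v =
      w x * fderiv ℝ f x v + f x * fderiv ℝ w x v := fun x => by simp [(hwf x).fderiv]
  have hparts := integral_mul_fderiv_eq_neg_fderiv_mul_of_integrable (μ := μ)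
    (f := fun x => w x * f x) (g := g) (v := v) ?_ ?_ ?_
    (fun x _ => (hwf x).differentiableAt)
    (fun x hx => (hg.differentiableOn one_ne_zero).differentiableAt
      (hΩ.mem_nhds (hwΩ (tsupport_mul_subset_left hx))))
  · simpa only [hdwf, mul_assoc] using hparts
  · have h := (integrable_mul_of_continuousOn (ν := μ) hwc hwΩ hw.continuous hw0
      (hdf.mul hg.continuousOn)).add (integrable_mul_of_continuousOn (ν := μ) hwc hwΩ hdw hdw0
      (hf.continuousOn.mul hg.continuousOn))
    refine h.congr (Eventually.of_forall fun x => ?_)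
    simp only [Pi.add_apply, Pi.mul_apply, hdwf]
    ring
  · simpa only [mul_assoc, Pi.mul_apply] using integrable_mul_of_continuousOn (ν := μ) hwc hwΩ
      hw.continuous hw0 (hf.continuousOn.mul hdg)
  · simpa only [mul_assoc, Pi.mul_apply] using integrable_mul_of_continuousOn (ν := μ) hwc hwΩ
      hw.continuous hw0 (hf.continuousOn.mul hg.continuousOn)

lemma integral_sq_mul_mul_fderiv_fderiv_eq_neg {f φ : E → ℝ} (hΩ : IsOpen Ω)
    (hφ : ContDiff ℝ 1 φ) (hφc : HasCompactSupport φ) (hφΩ : tsupport φ ⊆ Ω)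
    (hf : ContDiffOn ℝ 2 f Ω) (v : E) :
    ∫ x, φ x ^ 2 * (f x * fderiv ℝ (fun y => fderiv ℝ f y v) x v) ∂μ =
      -∫ x, (φ x ^ 2 * fderiv ℝ f x v ^ 2 +
        φ x * (2 * f x * fderiv ℝ φ x v * fderiv ℝ f x v)) ∂μ := by
  have hsq : tsupport (fun x => φ x ^ 2) ⊆ tsupport φ :=
    tsupport_comp_subset (g := fun y : ℝ => y ^ 2) (by simp) φ
  have hdsq : ∀ x, fderiv ℝ (fun y => φ y ^ 2) x v = 2 * φ x * fderiv ℝ φ x v := fun x => by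
    simp [((hφ.differentiable one_ne_zero x).hasFDerivAt.pow 2).fderiv]
  rw [integral_mul_mul_fderiv_eq_neg hΩ (hφ.pow 2) (hφc.mono' ((subset_tsupport _).trans hsq))
    (hsq.trans hφΩ) (hf.of_le one_le_two)
    ((hf.fderiv_of_isOpen hΩ (by norm_num)).clm_apply contDiffOn_const) v]
  congr! 3 with x
  rw [hdsq]
  ring

lemma integral_sq_mul_fderiv_sq_le {f φ : E → ℝ} (hΩ : IsOpen Ω) (hφ : ContDiff ℝ 1 φ)
    (hφc : HasCompactSupport φ) (hφΩ : tsupport φ ⊆ Ω) (hf : ContDiffOn ℝ 2 f Ω) (v : E) :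
    ∫ x, φ x ^ 2 * fderiv ℝ f x v ^ 2 ∂μ ≤
      4 * (∫ x, fderiv ℝ φ x v ^ 2 * f x ^ 2 ∂μ) -
        2 * ∫ x, φ x ^ 2 * (f x * fderiv ℝ (fun y => fderiv ℝ f y v) x v) ∂μ := by
  have hdf : ContinuousOn (fun x => fderiv ℝ f x v) Ω :=
    (hf.continuousOn_fderiv_of_isOpen hΩ one_le_two).clm_apply continuousOn_const
  have hdφ : Continuous fun x => fderiv ℝ φ x v :=
    (hφ.continuous_fderiv one_ne_zero).clm_apply continuous_const
  have hφ0 : ∀ x ∉ tsupport φ, φ x = 0 := fun _ => image_eq_zero_of_notMem_tsupport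
  have hint_df : Integrable (fun x => φ x ^ 2 * fderiv ℝ f x v ^ 2) μ :=
    integrable_mul_of_continuousOn hφc hφΩ (hφ.continuous.pow 2)
      (fun x hx => by simp [hφ0 x hx]) (hdf.pow 2)
  have hint_dφ : Integrable (fun x => fderiv ℝ φ x v ^ 2 * f x ^ 2) μ :=
    integrable_mul_of_continuousOn hφc hφΩ (hdφ.pow 2)
      (fun x hx => by simp [fderiv_of_notMem_tsupport (𝕜 := ℝ) hx]) (hf.continuousOn.pow 2)
  have hint_cross : Integrable (fun x => φ x ^ 2 * fderiv ℝ f x v ^ 2 +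
      φ x * (2 * f x * fderiv ℝ φ x v * fderiv ℝ f x v)) μ :=
    hint_df.add (integrable_mul_of_continuousOn hφc hφΩ hφ.continuous hφ0
      (((continuousOn_const.mul hf.continuousOn).mul hdφ.continuousOn).mul hdf))
  rw [integral_sq_mul_mul_fderiv_fderiv_eq_neg hΩ hφ hφc hφΩ hf v, mul_neg, sub_neg_eq_add,
    ← integral_const_mul, ← integral_const_mul,
    ← integral_add (hint_dφ.const_mul 4) (hint_cross.const_mul 2)]
  refine integral_mono hint_df ((hint_dφ.const_mul 4).add (hint_cross.const_mul 2)) fun x => ?_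
  have hsquare := sq_nonneg (φ x * fderiv ℝ f x v + 2 * f x * fderiv ℝ φ x v)
  simp only
  linarith

end IntegrationByParts

lemma continuousOn_fderiv_fderiv_apply {E : Type*} [NormedAddCommGroup E] [NormedSpace ℝ E]
    {f : E → ℝ} {Ω : Set E} (hΩ : IsOpen Ω) (hf : ContDiffOn ℝ 2 f Ω) (v : E) :
    ContinuousOn (fun x => fderiv ℝ (fun y => fderiv ℝ f y v) x v) Ω :=
  (((hf.fderiv_of_isOpen hΩ (by norm_num)).clm_apply
    contDiffOn_const).continuousOn_fderiv_of_isOpen hΩ le_rfl).clm_apply continuousOn_const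

lemma norm_fderiv_sq_eq_sum {n : ℕ} (f : ES n → ℝ) (x : ES n) :
    ‖fderiv ℝ f x‖ ^ 2 = ∑ i, fderiv ℝ f x (EuclideanSpace.single i 1) ^ 2 := by
  simpa using (EuclideanSpace.basisFun (Fin n) ℝ).norm_dual (fderiv ℝ f x)

lemma integral_sq_mul_norm_fderiv_sq_le_sub {n : ℕ} {f φ : ES n → ℝ} {Ω : Set (ES n)}
    (hΩ : IsOpen Ω) (hφ : ContDiff ℝ 1 φ) (hφc : HasCompactSupport φ) (hφΩ : tsupport φ ⊆ Ω)
    (hf : ContDiffOn ℝ 2 f Ω) :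
    ∫ x, φ x ^ 2 * ‖fderiv ℝ f x‖ ^ 2 ≤
      4 * (∫ x, ‖fderiv ℝ φ x‖ ^ 2 * f x ^ 2) -
        2 * ∫ x, φ x ^ 2 * (f x * heatLap n f x) := by
  have hφ0 : ∀ x ∉ tsupport φ, φ x ^ 2 = 0 := fun x hx => by
    simp [image_eq_zero_of_notMem_tsupport hx]
  have hdφ0 : ∀ v, ∀ x ∉ tsupport φ, fderiv ℝ φ x v ^ 2 = 0 := fun v x hx => by
    simp [fderiv_of_notMem_tsupport (𝕜 := ℝ) hx]
  have hdφ : ∀ v, Continuous fun x => fderiv ℝ φ x v ^ 2 := fun v =>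
    ((hφ.continuous_fderiv one_ne_zero).clm_apply continuous_const).pow 2
  have hdf : ∀ v, ContinuousOn (fun x => fderiv ℝ f x v ^ 2) Ω := fun v =>
    ((hf.continuousOn_fderiv_of_isOpen hΩ one_le_two).clm_apply continuousOn_const).pow 2
  have hsum := Finset.sum_le_sum fun (i : Fin n) (_ : i ∈ Finset.univ) =>
    integral_sq_mul_fderiv_sq_le (μ := volume) hΩ hφ hφc hφΩ hf (EuclideanSpace.single i 1)
  rw [Finset.sum_sub_distrib, ← Finset.mul_sum, ← Finset.mul_sum,
    ← integral_finsetSum _ fun i _ => ?_, ← integral_finsetSum _ fun i _ => ?_,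
    ← integral_finsetSum _ fun i _ => ?_] at hsum
  · simpa only [norm_fderiv_sq_eq_sum, heatLap, Finset.mul_sum, Finset.sum_mul] using hsum
  · exact integrable_mul_of_continuousOn hφc hφΩ (hφ.continuous.pow 2) hφ0
      (hf.continuousOn.mul (continuousOn_fderiv_fderiv_apply hΩ hf _))
  · exact integrable_mul_of_continuousOn hφc hφΩ (hdφ _) (hdφ0 _) (hf.continuousOn.pow 2)
  · exact integrable_mul_of_continuousOn hφc hφΩ (hφ.continuous.pow 2) hφ0 (hdf _)

section Cutoff

lemma exists_abs_deriv_smoothTransition_le :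
    ∃ C : ℝ, ∀ y, |deriv Real.smoothTransition y| ≤ C := by
  have hsupp : HasCompactSupport (deriv Real.smoothTransition) := by
    refine HasCompactSupport.intro (isCompact_Icc (a := (0 : ℝ)) (b := 1)) fun y hy => ?_
    rw [mem_Icc, not_and_or, not_le, not_le] at hy
    rcases hy with hy | hy
    · refine IsLocalMin.deriv_eq_zero (Eventually.of_forall fun z => ?_)
      rw [Real.smoothTransition.zero_of_nonpos hy.le]
      exact Real.smoothTransition.nonneg z
    · refine IsLocalMax.deriv_eq_zero (Eventually.of_forall fun z => ?_)
      rw [Real.smoothTransition.one_of_one_le hy.le]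
      exact Real.smoothTransition.le_one z
  exact hsupp.exists_bound_of_continuous
    ((Real.smoothTransition.contDiff (n := 1)).continuous_deriv le_rfl)

variable {E : Type*} [NormedAddCommGroup E] {x₀ x : E} {r ρ : ℝ}

/-- A smooth cutoff that is `1` on `B(x₀, r)` and vanishes outside `B(x₀, ρ)`, for `0 ≤ r < ρ`.
It is built from the squared norm, which is smooth also at the center. -/
def ballCutoff (x₀ : E) (r ρ : ℝ) (x : E) : ℝ :=
  Real.smoothTransition ((ρ ^ 2 - ‖x - x₀‖ ^ 2) / (ρ ^ 2 - r ^ 2))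

lemma ballCutoff_nonneg : 0 ≤ ballCutoff x₀ r ρ x := Real.smoothTransition.nonneg _

lemma ballCutoff_le_one : ballCutoff x₀ r ρ x ≤ 1 := Real.smoothTransition.le_one _

lemma ballCutoff_eq_one (hr : 0 ≤ r) (hrρ : r < ρ) (hx : x ∈ ball x₀ r) :
    ballCutoff x₀ r ρ x = 1 := by
  rw [mem_ball, dist_eq_norm] at hx
  refine Real.smoothTransition.one_of_one_le ((one_le_div ?_).2 ?_)
  · nlinarith
  · gcongr

lemma ballCutoff_eq_zero (hr : 0 ≤ r) (hrρ : r < ρ) (hx : x ∉ ball x₀ ρ) :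
    ballCutoff x₀ r ρ x = 0 := by
  rw [mem_ball, dist_eq_norm, not_lt] at hx
  refine Real.smoothTransition.zero_of_nonpos (div_nonpos_of_nonpos_of_nonneg ?_ ?_) <;> nlinarith

lemma tsupport_ballCutoff_subset (hr : 0 ≤ r) (hrρ : r < ρ) :
    tsupport (ballCutoff x₀ r ρ) ⊆ closedBall x₀ ρ :=
  closure_minimal (Function.support_subset_iff'.2 fun _ hx =>
    ballCutoff_eq_zero hr hrρ fun h => hx (ball_subset_closedBall h)) isClosed_closedBall

variable [InnerProductSpace ℝ E]

lemma contDiff_ballCutoff {k : ℕ∞} : ContDiff ℝ k (ballCutoff x₀ r ρ) :=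
  Real.smoothTransition.contDiff.comp
    ((contDiff_const.sub ((contDiff_id.sub contDiff_const).norm_sq ℝ)).div_const _)

lemma hasFDerivAt_ballCutoff (x₀ : E) (r ρ : ℝ) (x : E) :
    HasFDerivAt (ballCutoff x₀ r ρ)
      (deriv Real.smoothTransition ((ρ ^ 2 - ‖x - x₀‖ ^ 2) / (ρ ^ 2 - r ^ 2)) •
        (-(2 / (ρ ^ 2 - r ^ 2)) • innerSL ℝ (x - x₀))) x := by
  have hq : HasFDerivAt (fun y => (ρ ^ 2 - ‖y - x₀‖ ^ 2) / (ρ ^ 2 - r ^ 2))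
      (-(2 / (ρ ^ 2 - r ^ 2)) • innerSL ℝ (x - x₀)) x := by
    have h := (((hasFDerivAt_id x).sub_const x₀).norm_sq.const_sub (ρ ^ 2)).mul_const
      (ρ ^ 2 - r ^ 2)⁻¹
    simp only [← div_eq_mul_inv] at h
    refine h.congr_fderiv ?_
    ext v
    simp
    ring
  exact ((Real.smoothTransition.contDiff (n := 1)).differentiable
    (by simp) _).hasDerivAt.comp_hasFDerivAt x hq

lemma norm_fderiv_ballCutoff_le {C : ℝ} (hC : ∀ y, |deriv Real.smoothTransition y| ≤ C)
    (hr : 0 ≤ r) (hrρ : r < ρ) (x : E) :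
    ‖fderiv ℝ (ballCutoff x₀ r ρ) x‖ ≤ 2 * C / (ρ - r) := by
  have hC0 : 0 ≤ C := (abs_nonneg _).trans (hC 0)
  have hρr : 0 < ρ - r := sub_pos.2 hrρ
  by_cases hx : x ∈ ball x₀ ρ
  · have hd : 0 < ρ ^ 2 - r ^ 2 := by nlinarith
    have hinner : ‖-(2 / (ρ ^ 2 - r ^ 2)) • innerSL ℝ (x - x₀)‖ ≤ 2 / (ρ - r) := by
      rw [norm_smul, innerSL_apply_norm, norm_neg, Real.norm_of_nonneg (by positivity),
        div_mul_eq_mul_div, div_le_div_iff₀ hd hρr, ← dist_eq_norm]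
      nlinarith [mem_ball.1 hx]
    calc ‖fderiv ℝ (ballCutoff x₀ r ρ) x‖ ≤ C * (2 / (ρ - r)) := by
          rw [(hasFDerivAt_ballCutoff x₀ r ρ x).fderiv, norm_smul]
          exact mul_le_mul (hC _) hinner (norm_nonneg _) hC0
      _ = 2 * C / (ρ - r) := by ring
  · have hmin : IsLocalMin (ballCutoff x₀ r ρ) x := Eventually.of_forall fun y => by
      rw [ballCutoff_eq_zero hr hrρ hx]
      exact ballCutoff_nonneg
    rw [hmin.fderiv_eq_zero, norm_zero]
    positivity

end Cutoff

section HeatEquation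

/-- A classical solution of the heat equation on `I × Ω`: jointly `C¹`, of class `C²` in the space
variable at each time, and satisfying `∂ₜu = Δu`. The sets `I` and `Ω` are meant to be open. -/
structure IsHeatSolutionOn {n : ℕ} (u : ℝ → ES n → ℝ) (I : Set ℝ) (Ω : Set (ES n)) : Prop where
  contDiffOn : ContDiffOn ℝ 1 (fun p : ℝ × ES n => u p.1 p.2) (I ×ˢ Ω)
  contDiffOn_space : ∀ τ ∈ I, ContDiffOn ℝ 2 (u τ) Ω
  hasDerivAt_time : ∀ τ ∈ I, ∀ x ∈ Ω, HasDerivAt (fun σ => u σ x) (heatLap n (u τ) x) τ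

namespace IsHeatSolutionOn

variable {n : ℕ} {u : ℝ → ES n → ℝ} {I : Set ℝ} {Ω : Set (ES n)}

lemma of_contDiffOn (hu : ContDiffOn ℝ 2 (fun p : ℝ × ES n => u p.1 p.2) (I ×ˢ Ω))
    (heq : ∀ τ ∈ I, ∀ x ∈ Ω, HasDerivAt (fun σ => u σ x) (heatLap n (u τ) x) τ) :
    IsHeatSolutionOn u I Ω where
  contDiffOn := hu.of_le one_le_two
  contDiffOn_space τ hτ := hu.comp (contDiff_prodMk_right τ).contDiffOn fun _ hx => ⟨hτ, hx⟩
  hasDerivAt_time := heq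

lemma hasFDerivAt (hu : IsHeatSolutionOn u I Ω) (hI : IsOpen I) (hΩ : IsOpen Ω) {p : ℝ × ES n}
    (hp : p ∈ I ×ˢ Ω) : HasFDerivAt (fun p : ℝ × ES n => u p.1 p.2)
      (fderiv ℝ (fun p : ℝ × ES n => u p.1 p.2) p) p :=
  ((hu.contDiffOn.differentiableOn one_ne_zero).differentiableAt
    ((hI.prod hΩ).mem_nhds hp)).hasFDerivAt

lemma continuousOn_fderiv_space (hu : IsHeatSolutionOn u I Ω) (hI : IsOpen I) (hΩ : IsOpen Ω) :
    ContinuousOn (fun p : ℝ × ES n => fderiv ℝ (u p.1) p.2) (I ×ˢ Ω) :=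
  ((hu.contDiffOn.continuousOn_fderiv_of_isOpen (hI.prod hΩ) le_rfl).clm_comp
    (continuousOn_const (c := ContinuousLinearMap.inr ℝ ℝ (ES n)))).congr fun p hp =>
      (HasFDerivAt.comp (f := fun y => (p.1, y)) p.2 (hu.hasFDerivAt hI hΩ hp)
        (hasFDerivAt_prodMk_right p.1 p.2)).fderiv

lemma continuousOn_heatLap (hu : IsHeatSolutionOn u I Ω) (hI : IsOpen I) (hΩ : IsOpen Ω) :
    ContinuousOn (fun p : ℝ × ES n => heatLap n (u p.1) p.2) (I ×ˢ Ω) := by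
  refine ((hu.contDiffOn.continuousOn_fderiv_of_isOpen (hI.prod hΩ) le_rfl).clm_apply
    (continuousOn_const (c := ((1 : ℝ), (0 : ES n))))).congr fun p hp => ?_
  have hline : HasDerivAt (fun σ : ℝ => (σ, p.2)) ((1 : ℝ), (0 : ES n)) p.1 :=
    (hasDerivAt_id p.1).prodMk (hasDerivAt_const p.1 p.2)
  exact (hu.hasDerivAt_time p.1 hp.1 p.2 hp.2).unique
    (HasFDerivAt.comp_hasDerivAt (f := fun σ => (σ, p.2)) p.1 (hu.hasFDerivAt hI hΩ hp) hline)

variable {σ t : ℝ} {φ w : ES n → ℝ} {K : Set (ES n)}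

lemma two_mul_integral_mul_heatLap (hu : IsHeatSolutionOn u I Ω) (hI : IsOpen I) (hΩ : IsOpen Ω)
    (hσt : σ ≤ t) (hσI : Icc σ t ⊆ I) (hK : IsCompact K) (hKΩ : K ⊆ Ω) (hw : Continuous w)
    (hw0 : ∀ x ∉ K, w x = 0) :
    2 * ∫ τ in Icc σ t, ∫ x, w x * (u τ x * heatLap n (u τ) x) =
      (∫ x, w x * u t x ^ 2) - ∫ x, w x * u σ x ^ 2 := by
  have hcont := hu.contDiffOn.continuousOn.fun_mul (hu.continuousOn_heatLap hI hΩ)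
  have hftc : ∀ x ∈ Ω, 2 * ∫ τ in Icc σ t, u τ x * heatLap n (u τ) x = u t x ^ 2 - u σ x ^ 2 := by
    intro x hx
    have hmaps : MapsTo (fun τ : ℝ => (τ, x)) (uIcc σ t) (I ×ˢ Ω) := fun τ hτ =>
      ⟨hσI (by rwa [uIcc_of_le hσt] at hτ), hx⟩
    rw [← integral_const_mul, integral_Icc_eq_integral_Ioc,
      ← intervalIntegral.integral_of_le hσt]
    refine intervalIntegral.integral_eq_sub_of_hasDerivAt (f := fun τ => u τ x ^ 2)
      (fun τ hτ => ?_) (ContinuousOn.intervalIntegrable ?_)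
    · simpa [mul_assoc] using (hu.hasDerivAt_time τ (hmaps hτ).1 x hx).fun_pow 2
    · exact continuousOn_const.mul (hcont.comp (by fun_prop) hmaps)
  have hslice : ∀ τ ∈ Icc σ t, Integrable fun x => w x * u τ x ^ 2 := fun τ hτ =>
    integrable_mul_of_continuousOn hK hKΩ hw hw0
      ((hu.contDiffOn_space τ (hσI hτ)).continuousOn.fun_pow 2)
  rw [integral_integral_swap
    (integrable_prod_mul_of_continuousOn isCompact_Icc hσI hK hKΩ hw hw0 hcont),
    ← integral_sub (hslice t (right_mem_Icc.2 hσt)) (hslice σ (left_mem_Icc.2 hσt)),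
    ← integral_const_mul]
  refine integral_congr_ae (Eventually.of_forall fun x => ?_)
  simp only
  by_cases hx : x ∈ K
  · rw [integral_const_mul, mul_left_comm, hftc x (hKΩ hx), mul_sub]
  · simp [hw0 x hx]

lemma integrableOn_integral_sq_mul_norm_fderiv_sq (hu : IsHeatSolutionOn u I Ω) (hI : IsOpen I)
    (hΩ : IsOpen Ω) (hσI : Icc σ t ⊆ I) (hφ : Continuous φ) (hφc : HasCompactSupport φ)
    (hφΩ : tsupport φ ⊆ Ω) :
    IntegrableOn (fun τ => ∫ x, φ x ^ 2 * ‖fderiv ℝ (u τ) x‖ ^ 2) (Icc σ t) :=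
  (integrable_prod_mul_of_continuousOn (μ := volume) (ν := volume) isCompact_Icc hσI hφc hφΩ
    (hφ.pow 2) (fun x hx => by simp [image_eq_zero_of_notMem_tsupport hx])
    ((hu.continuousOn_fderiv_space hI hΩ).norm.fun_pow 2)).integral_prod_left

lemma setIntegral_sq_mul_norm_fderiv_sq_le (hu : IsHeatSolutionOn u I Ω) (hI : IsOpen I)
    (hΩ : IsOpen Ω) (hσt : σ ≤ t) (hσI : Icc σ t ⊆ I) (hφ : ContDiff ℝ 1 φ)
    (hφc : HasCompactSupport φ) (hφΩ : tsupport φ ⊆ Ω) :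
    ∫ τ in Icc σ t, ∫ x, φ x ^ 2 * ‖fderiv ℝ (u τ) x‖ ^ 2 ≤
      (∫ x, φ x ^ 2 * u σ x ^ 2) +
        4 * ∫ τ in Icc σ t, ∫ x, ‖fderiv ℝ φ x‖ ^ 2 * u τ x ^ 2 := by
  have hφ0 : ∀ x ∉ tsupport φ, φ x ^ 2 = 0 := fun x hx => by
    simp [image_eq_zero_of_notMem_tsupport hx]
  have hgrad := hu.integrableOn_integral_sq_mul_norm_fderiv_sq hI hΩ hσI hφ.continuous hφc hφΩ
  have hlap := (integrable_prod_mul_of_continuousOn (μ := volume) (ν := volume) isCompact_Icc hσI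
    hφc hφΩ (hφ.continuous.fun_pow 2) hφ0
    (hu.contDiffOn.continuousOn.fun_mul (hu.continuousOn_heatLap hI hΩ))).integral_prod_left
  have hcut := (integrable_prod_mul_of_continuousOn (μ := volume) (ν := volume) isCompact_Icc hσI
    hφc hφΩ ((hφ.continuous_fderiv one_ne_zero).norm.fun_pow 2)
    (fun x hx => by simp [fderiv_of_notMem_tsupport (𝕜 := ℝ) hx])
    (hu.contDiffOn.continuousOn.fun_pow 2)).integral_prod_left
  have hspace : ∫ τ in Icc σ t, ∫ x, φ x ^ 2 * ‖fderiv ℝ (u τ) x‖ ^ 2 ≤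
      4 * (∫ τ in Icc σ t, ∫ x, ‖fderiv ℝ φ x‖ ^ 2 * u τ x ^ 2) -
        2 * ∫ τ in Icc σ t, ∫ x, φ x ^ 2 * (u τ x * heatLap n (u τ) x) := by
    rw [← integral_const_mul, ← integral_const_mul,
      ← integral_sub (hcut.const_mul 4) (hlap.const_mul 2)]
    exact setIntegral_mono_on hgrad ((hcut.const_mul 4).sub (hlap.const_mul 2)) measurableSet_Icc
      fun τ hτ => integral_sq_mul_norm_fderiv_sq_le_sub hΩ hφ hφc hφΩ
        (hu.contDiffOn_space τ (hσI hτ))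
  have htime := hu.two_mul_integral_mul_heatLap hI hΩ hσt hσI hφc hφΩ (hφ.continuous.fun_pow 2) hφ0
  have hfinal : 0 ≤ ∫ x, φ x ^ 2 * u t x ^ 2 := integral_nonneg fun x => by positivity
  linarith

lemma setIntegral_norm_gradient_sq_le (hu : IsHeatSolutionOn u I Ω) (hI : IsOpen I)
    (hΩ : IsOpen Ω) (hσI : Icc σ t ⊆ I) (hφ : ContDiff ℝ 1 φ)
    (hφc : HasCompactSupport φ) (hφΩ : tsupport φ ⊆ Ω) {S : Set ℝ} (hS : MeasurableSet S)
    (hSσ : S ⊆ Icc σ t) {B : Set (ES n)} (hB : MeasurableSet B) (hφB : ∀ x ∈ B, φ x = 1) :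
    ∫ τ in S, ∫ x in B, ‖gradient (u τ) x‖ ^ 2 ≤
      ∫ τ in Icc σ t, ∫ x, φ x ^ 2 * ‖fderiv ℝ (u τ) x‖ ^ 2 := by
  have hnonneg : ∀ τ x, 0 ≤ φ x ^ 2 * ‖fderiv ℝ (u τ) x‖ ^ 2 := fun τ x => by positivity
  have hφ0 : ∀ x ∉ tsupport φ, φ x ^ 2 = 0 := fun x hx => by
    simp [image_eq_zero_of_notMem_tsupport hx]
  have hint := hu.integrableOn_integral_sq_mul_norm_fderiv_sq hI hΩ hσI hφ.continuous hφc hφΩ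
  have hslice : ∀ τ ∈ S, ∫ x in B, ‖gradient (u τ) x‖ ^ 2 ≤
      ∫ x, φ x ^ 2 * ‖fderiv ℝ (u τ) x‖ ^ 2 := fun τ hτ => by
    calc ∫ x in B, ‖gradient (u τ) x‖ ^ 2
        = ∫ x in B, φ x ^ 2 * ‖fderiv ℝ (u τ) x‖ ^ 2 :=
          setIntegral_congr_fun hB fun x hx => by simp [hφB x hx, gradient]
      _ ≤ ∫ x, φ x ^ 2 * ‖fderiv ℝ (u τ) x‖ ^ 2 :=
          setIntegral_le_integral (integrable_mul_of_continuousOn hφc hφΩ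
            (hφ.continuous.fun_pow 2) hφ0 (((hu.contDiffOn_space τ
              (hσI (hSσ hτ))).continuousOn_fderiv_of_isOpen hΩ one_le_two).norm.fun_pow 2))
            (Eventually.of_forall (hnonneg τ))
  calc ∫ τ in S, ∫ x in B, ‖gradient (u τ) x‖ ^ 2
      ≤ ∫ τ in S, ∫ x, φ x ^ 2 * ‖fderiv ℝ (u τ) x‖ ^ 2 :=
        integral_mono_of_nonneg
          (Eventually.of_forall fun τ => integral_nonneg fun x => sq_nonneg _)
          (hint.mono_set hSσ) ((ae_restrict_iff' hS).2 (Eventually.of_forall hslice))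
    _ ≤ ∫ τ in Icc σ t, ∫ x, φ x ^ 2 * ‖fderiv ℝ (u τ) x‖ ^ 2 :=
        setIntegral_mono_set hint
          (Eventually.of_forall fun τ => integral_nonneg (hnonneg τ)) hSσ.eventuallyLE

lemma setIntegral_norm_gradient_sq_le_of_cutoff {a b s : ℝ} {B : Set (ES n)} {M : ℝ}
    (hu : IsHeatSolutionOn u (Ioo a b) Ω) (hΩ : IsOpen Ω) (has : a < s) (hst : s ≤ t)
    (htb : t < b) (hφ : ContDiff ℝ 1 φ) (hφc : HasCompactSupport φ) (hφΩ : tsupport φ ⊆ Ω)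
    (hφ1 : ∀ x, |φ x| ≤ 1) (hdφ : ∀ x, ‖fderiv ℝ φ x‖ ^ 2 ≤ M) (hB : MeasurableSet B)
    (hφB : ∀ x ∈ B, φ x = 1)
    (hint : IntegrableOn (fun p : ℝ × ES n => u p.1 p.2 ^ 2) (Ioo a b ×ˢ Ω)) :
    ∫ τ in Ioo s t, ∫ x in B, ‖gradient (u τ) x‖ ^ 2 ≤
      (4 * M + 1 / (s - a)) * ∫ τ in Ioo a b, ∫ x in Ω, u τ x ^ 2 := by
  have hφ_sq_le : ∀ x, φ x ^ 2 ≤ 1 := fun x => (sq_le_one_iff_abs_le_one _).2 (hφ1 x)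
  have hφ_zero : ∀ x ∉ Ω, φ x ^ 2 = 0 := fun x hx => by
    simp [image_eq_zero_of_notMem_tsupport fun h => hx (hφΩ h)]
  have hdφ_zero : ∀ x ∉ Ω, ‖fderiv ℝ φ x‖ ^ 2 = 0 := fun x hx => by
    simp [fderiv_of_notMem_tsupport (𝕜 := ℝ) fun h => hx (hφΩ h)]
  obtain ⟨σ, hσ, hinitial⟩ := exists_mem_Ioo_integral_mul_le (ν := volume) has
    (Ioo_subset_Ioo_right (hst.trans htb.le)) hint (fun _ => sq_nonneg _)
    (hφ.continuous.fun_pow 2).aestronglyMeasurable (fun _ => sq_nonneg _) hφ_sq_le hφ_zero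
  have hσI : Icc σ t ⊆ Ioo a b := fun τ hτ => ⟨hσ.1.trans_le hτ.1, hτ.2.trans_lt htb⟩
  have hcutoff := setIntegral_integral_mul_le hint (fun _ => sq_nonneg _)
    ((hφ.continuous_fderiv one_ne_zero).norm.fun_pow 2).aestronglyMeasurable
    (fun x => sq_nonneg _) hdφ hdφ_zero hσI
  calc ∫ τ in Ioo s t, ∫ x in B, ‖gradient (u τ) x‖ ^ 2
      ≤ ∫ τ in Icc σ t, ∫ x, φ x ^ 2 * ‖fderiv ℝ (u τ) x‖ ^ 2 :=
        hu.setIntegral_norm_gradient_sq_le isOpen_Ioo hΩ hσI hφ hφc hφΩ measurableSet_Ioo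
          (fun τ hτ => ⟨(hσ.2.trans hτ.1).le, hτ.2.le⟩) hB hφB
    _ ≤ (∫ x, φ x ^ 2 * u σ x ^ 2) + 4 * ∫ τ in Icc σ t, ∫ x, ‖fderiv ℝ φ x‖ ^ 2 * u τ x ^ 2 :=
        hu.setIntegral_sq_mul_norm_fderiv_sq_le isOpen_Ioo hΩ (hσ.2.le.trans hst) hσI hφ hφc hφΩ
    _ ≤ 1 / (s - a) * (∫ τ in Ioo a b, ∫ x in Ω, u τ x ^ 2) +
          4 * (M * ∫ τ in Ioo a b, ∫ x in Ω, u τ x ^ 2) := by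
        gcongr ?_ + 4 * ?_
    _ = (4 * M + 1 / (s - a)) * ∫ τ in Ioo a b, ∫ x in Ω, u τ x ^ 2 := by ring

end IsHeatSolutionOn

theorem heat_caccioppoli_general :
    ∃ c : ℝ, 0 < c ∧ ∀ {n : ℕ} {a b s t : ℝ} {u : ℝ → ES n → ℝ} {x₀ : ES n} {r ρ : ℝ},
      a < s → s ≤ t → t < b → 0 < r → r < ρ → IsHeatSolutionOn u (Ioo a b) (ball x₀ ρ) →
      IntegrableOn (fun p : ℝ × ES n => u p.1 p.2 ^ 2) (Ioo a b ×ˢ ball x₀ ρ) →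
      ∫ τ in Ioo s t, ∫ x in ball x₀ r, ‖gradient (u τ) x‖ ^ 2 ≤
        c * (1 / (ρ - r) ^ 2 + 1 / (s - a)) *
          ∫ τ in Ioo a b, ∫ x in ball x₀ ρ, u τ x ^ 2 := by
  obtain ⟨C, hC⟩ := exists_abs_deriv_smoothTransition_le
  refine ⟨1 + 64 * C ^ 2, by positivity, fun {n a b s t u x₀ r ρ} has hst htb hr hrρ hu hint => ?_⟩
  -- The intermediate radius keeps the closed support of the cutoff inside the open ball.
  have hrm : r < (r + ρ) / 2 := by linarith
  have hφ_sub : tsupport (ballCutoff x₀ r ((r + ρ) / 2)) ⊆ closedBall x₀ ((r + ρ) / 2) :=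
    tsupport_ballCutoff_subset hr.le hrm
  have hdφ : ∀ x, ‖fderiv ℝ (ballCutoff x₀ r ((r + ρ) / 2)) x‖ ^ 2 ≤ 16 * C ^ 2 / (ρ - r) ^ 2 :=
    fun x => by
      calc ‖fderiv ℝ (ballCutoff x₀ r ((r + ρ) / 2)) x‖ ^ 2
          ≤ (2 * C / ((r + ρ) / 2 - r)) ^ 2 := by
            gcongr
            exact norm_fderiv_ballCutoff_le hC hr.le hrm x
        _ = 16 * C ^ 2 / (ρ - r) ^ 2 := by
            rw [show (r + ρ) / 2 - r = (ρ - r) / 2 by ring]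
            field_simp
            ring
  have : 0 < s - a := sub_pos.2 has
  calc ∫ τ in Ioo s t, ∫ x in ball x₀ r, ‖gradient (u τ) x‖ ^ 2
      ≤ (4 * (16 * C ^ 2 / (ρ - r) ^ 2) + 1 / (s - a)) *
          ∫ τ in Ioo a b, ∫ x in ball x₀ ρ, u τ x ^ 2 :=
        hu.setIntegral_norm_gradient_sq_le_of_cutoff isOpen_ball has hst htb contDiff_ballCutoff
          ((isCompact_closedBall _ _).of_isClosed_subset (isClosed_tsupport _) hφ_sub)
          (hφ_sub.trans (closedBall_subset_ball (by linarith)))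
          (fun x => (abs_of_nonneg ballCutoff_nonneg).trans_le ballCutoff_le_one)
          hdφ measurableSet_ball (fun x hx => ballCutoff_eq_one hr.le hrm hx) hint
    _ ≤ (1 + 64 * C ^ 2) * (1 / (ρ - r) ^ 2 + 1 / (s - a)) *
          ∫ τ in Ioo a b, ∫ x in ball x₀ ρ, u τ x ^ 2 := by
        gcongr
        have hslack : 0 ≤ 1 / (ρ - r) ^ 2 + 64 * C ^ 2 * (1 / (s - a)) := by positivity
        linear_combination hslack

end HeatEquation

/-- **Caccioppoli inequality for the heat equation.** There is `c(n) > 0` such that for any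
smooth solution `u` of the heat equation on `(a,b) × ℝⁿ`, any `a < s ≤ t < b`, `x₀ ∈ ℝⁿ` and
`0 < r < ρ`,
`∫ₛᵗ ∫_{B(x₀,r)} |∇u|² ≤ c(n) (1/(ρ-r)² + 1/(s-a)) ∫ₐᵇ ∫_{B(x₀,ρ)} |u|²`
whenever the right-hand side is finite. -/
theorem heat_caccioppoli (n : ℕ) :
    ∃ c : ℝ, 0 < c ∧
      ∀ (a b s t : ℝ) (u : ℝ → ES n → ℝ), a < s → s ≤ t → t < b →
        ContDiffOn ℝ (⊤ : ℕ∞) (fun p : ℝ × ES n => u p.1 p.2) (Set.Ioo a b ×ˢ Set.univ) →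
        (∀ (τ : ℝ) (x : ES n), τ ∈ Set.Ioo a b →
          HasDerivAt (fun σ => u σ x) (heatLap n (u τ) x) τ) →
        ∀ (x₀ : ES n) (r ρ : ℝ), 0 < r → r < ρ →
          IntegrableOn (fun p : ℝ × ES n => (u p.1 p.2) ^ 2)
            (Set.Ioo a b ×ˢ Metric.ball x₀ ρ) →
          (∫ τ in Set.Ioo s t, ∫ x in Metric.ball x₀ r, ‖gradient (u τ) x‖ ^ 2) ≤
            c * (1 / (ρ - r) ^ 2 + 1 / (s - a)) *
              ∫ τ in Set.Ioo a b, ∫ x in Metric.ball x₀ ρ, (u τ x) ^ 2 := by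
  obtain ⟨c, hc, hcacc⟩ := heat_caccioppoli_general
  exact ⟨c, hc, fun a b s t u has hst htb hu heq x₀ r ρ hr hrρ hint =>
    hcacc has hst htb hr hrρ (.of_contDiffOn
      ((hu.of_le (WithTop.coe_le_coe.2 le_top)).mono (prod_mono_right (subset_univ _)))
      fun τ hτ x _ => heq τ x hτ) hint⟩

end
end
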